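/- Let K be an algebraically closed field of characteristic 0, let f and g be nonconstant, relatively prime polynomials in K[t] with deg f ≥ deg g, set A = f² − g², B = 2fg, C = f² + g², and let w be a nonzero constant polynomial. Suppose the leading term of f² equals the leading term of g² (i.e., deg f = deg g and (leadingCoeff f)² = (leadingCoeff g)²). If (x, y, z) is a solution in positive integers of (wA)^x + (wB)^y = (wC)^z, then y ≤ 2 and z ≤ 2. -/

import Mathlib

open Polynomial

/-!
Since `f` and `g` are coprime, so are `A = f² - g²` and `B = 2fg`. The Mason–Stothers theorem
then bounds the degree of each of the three powers in `(wA)^x + (wB)^y = (wC)^z` strictly by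
`deg A + deg B + deg C`, which is at most `6 deg f`. But when `deg f = deg g` the degree of `B` is
exactly `2 deg f`, and so is that of `C` unless the leading terms of `f²` and `g²` cancel in the
sum. Hence neither `y` nor `z` reaches `3`.
-/

section Radical

open UniqueFactorizationMonoid

theorem radical_pow_dvd_self {M : Type*} [CommMonoidWithZero M] [NormalizationMonoid M]
    [UniqueFactorizationMonoid M] (a : M) (n : ℕ) : radical (a ^ n) ∣ a :=
  radical_pow_dvd.trans radical_dvd_self

theorem radical_pow_mul_pow_mul_pow_dvd {M : Type*} [CommMonoidWithZero M]
    [NormalizationMonoid M] [UniqueFactorizationMonoid M] (a b c : M) (l m n : ℕ) :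
    radical (a ^ l * b ^ m * c ^ n) ∣ a * b * c :=
  calc radical (a ^ l * b ^ m * c ^ n)
    _ ∣ radical (a ^ l * b ^ m) * radical (c ^ n) := radical_mul_dvd
    _ ∣ radical (a ^ l) * radical (b ^ m) * radical (c ^ n) :=
      mul_dvd_mul_right radical_mul_dvd _
    _ ∣ a * b * c :=
      mul_dvd_mul (mul_dvd_mul (radical_pow_dvd_self a l) (radical_pow_dvd_self b m))
        (radical_pow_dvd_self c n)

theorem natDegree_radical_pow_mul_pow_mul_pow_le {K : Type*} [Field K] [DecidableEq K]
    {a b c : K[X]} (ha : a ≠ 0) (hb : b ≠ 0) (hc : c ≠ 0) (l m n : ℕ) :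
    (radical (a ^ l * b ^ m * c ^ n)).natDegree ≤ a.natDegree + b.natDegree + c.natDegree := by
  rw [← natDegree_mul ha hb, ← natDegree_mul (mul_ne_zero ha hb) hc]
  exact natDegree_le_of_dvd (radical_pow_mul_pow_mul_pow_dvd a b c l m n)
    (mul_ne_zero (mul_ne_zero ha hb) hc)

end Radical

theorem mul_natDegree_lt_of_pow_add_pow_eq_pow {K : Type*} [Field K] [CharZero K]
    {a b c : K[X]} (ha : a ≠ 0) (hb : b ≠ 0) (hc : c ≠ 0) (hab : IsCoprime a b)
    (hpos : 0 < a.natDegree + b.natDegree + c.natDegree)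
    {l m n : ℕ} (h : a ^ l + b ^ m = c ^ n) :
    l * a.natDegree < a.natDegree + b.natDegree + c.natDegree ∧
      m * b.natDegree < a.natDegree + b.natDegree + c.natDegree ∧
      n * c.natDegree < a.natDegree + b.natDegree + c.natDegree := by
  classical
  have hsum : a ^ l + b ^ m + -c ^ n = 0 := by rw [h, add_neg_cancel]
  have hrad := natDegree_radical_pow_mul_pow_mul_pow_le ha hb hc l m n
  rcases Polynomial.abc (pow_ne_zero l ha) (pow_ne_zero m hb) (neg_ne_zero.mpr (pow_ne_zero n hc))
    hab.pow hsum with hlt | hconst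
  · rw [mul_neg, UniqueFactorizationDomain.radical_neg, natDegree_neg, natDegree_pow,
      natDegree_pow, natDegree_pow] at hlt
    omega
  · simp only [derivative_eq_zero, natDegree_neg, natDegree_pow] at hconst
    omega

theorem isCoprime_sq_sub_sq_two_mul_mul {R : Type*} [CommRing R] (h2 : IsUnit (2 : R))
    {f g : R} (hfg : IsCoprime f g) : IsCoprime (f ^ 2 - g ^ 2) (2 * f * g) := by
  rw [mul_assoc, isCoprime_mul_unit_left_right h2]
  have hf : IsCoprime (f ^ 2 - g ^ 2) f := by
    have := (hfg.symm.pow_left (m := 2)).neg_left.add_mul_left_left f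
    rwa [← sq, neg_add_eq_sub] at this
  have hg : IsCoprime (f ^ 2 - g ^ 2) g := by
    have := (hfg.pow_left (m := 2)).add_mul_left_left (-g)
    rwa [mul_neg, ← sq, ← sub_eq_add_neg] at this
  exact hf.mul_right hg

theorem natDegree_mul_of_isUnit_left {R : Type*} [Semiring R] [NoZeroDivisors R] {u : R[X]}
    (hu : IsUnit u) (p : R[X]) : (u * p).natDegree = p.natDegree := by
  obtain ⟨c, hc, rfl⟩ := Polynomial.isUnit_iff.mp hu
  exact natDegree_C_mul_of_isUnit hc p

theorem natDegree_add_eq_max_of_leadingCoeff_add_ne_zero {R : Type*} [Semiring R] {p q : R[X]}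
    (h : p.leadingCoeff + q.leadingCoeff ≠ 0) :
    (p + q).natDegree = max p.natDegree q.natDegree := by
  have hadd := degree_add_eq_of_leadingCoeff_add_ne_zero h
  rcases le_total p.degree q.degree with hpq | hqp
  · rw [max_eq_right hpq] at hadd
    rw [natDegree_eq_of_degree_eq hadd, max_eq_right (natDegree_le_natDegree hpq)]
  · rw [max_eq_left hqp] at hadd
    rw [natDegree_eq_of_degree_eq hadd, max_eq_left (natDegree_le_natDegree hqp)]

section Jesmanowicz

variable {K : Type*} [Field K] [CharZero K] {f g w : K[X]} {x y z : ℕ}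

theorem jesmanowicz_poly_mul_natDegree_lt (hf : 0 < f.natDegree) (hdeg : g.natDegree ≤ f.natDegree)
    (hfg : IsCoprime f g) (hw : IsUnit w)
    (heq : (w * (f ^ 2 - g ^ 2)) ^ x + (w * (2 * f * g)) ^ y = (w * (f ^ 2 + g ^ 2)) ^ z) :
    y * (f.natDegree + g.natDegree) < 5 * f.natDegree + g.natDegree ∧
      z * (f ^ 2 + g ^ 2).natDegree < 5 * f.natDegree + g.natDegree := by
  have h2 : IsUnit (2 : K[X]) := by
    rw [← map_ofNat C 2]
    exact (IsUnit.mk0 (2 : K) two_ne_zero).map C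
  have hndvd : ¬ f ∣ g ^ 2 := fun h ↦
    not_isUnit_of_natDegree_pos f hf (hfg.pow_right.isUnit_of_dvd h)
  have hf0 : f ≠ 0 := ne_zero_of_natDegree_gt hf
  have hg0 : g ≠ 0 := by
    rintro rfl
    simp at hndvd
  have hA0 : f ^ 2 - g ^ 2 ≠ 0 := fun h ↦ hndvd ⟨f, by linear_combination -h⟩
  have hB0 : 2 * f * g ≠ 0 := mul_ne_zero (mul_ne_zero two_ne_zero hf0) hg0
  have hC0 : f ^ 2 + g ^ 2 ≠ 0 := fun h ↦ hndvd ⟨-f, by linear_combination h⟩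
  have hsq : (f ^ 2).natDegree ≤ 2 * f.natDegree ∧ (g ^ 2).natDegree ≤ 2 * f.natDegree := by
    rw [natDegree_pow, natDegree_pow]
    omega
  have hA : (f ^ 2 - g ^ 2).natDegree ≤ 2 * f.natDegree :=
    natDegree_sub_le_iff_left hsq.2 |>.mpr hsq.1
  have hB : (2 * f * g).natDegree = f.natDegree + g.natDegree := by
    rw [natDegree_mul (mul_ne_zero two_ne_zero hf0) hg0, natDegree_mul_of_isUnit_left h2]
  have hC : (f ^ 2 + g ^ 2).natDegree ≤ 2 * f.natDegree :=
    natDegree_add_le_of_degree_le hsq.1 hsq.2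
  have hcop : IsCoprime (w * (f ^ 2 - g ^ 2)) (w * (2 * f * g)) :=
    (isCoprime_mul_unit_left hw _ _).mpr (isCoprime_sq_sub_sq_two_mul_mul h2 hfg)
  have habc := mul_natDegree_lt_of_pow_add_pow_eq_pow (mul_ne_zero hw.ne_zero hA0)
    (mul_ne_zero hw.ne_zero hB0) (mul_ne_zero hw.ne_zero hC0) hcop
  simp only [natDegree_mul_of_isUnit_left hw, hB] at habc
  obtain ⟨-, hy, hz⟩ := habc (by omega) heq
  omega

theorem jesmanowicz_poly_y_le_two (hf : 0 < f.natDegree) (hdeg : f.natDegree = g.natDegree)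
    (hfg : IsCoprime f g) (hw : IsUnit w)
    (heq : (w * (f ^ 2 - g ^ 2)) ^ x + (w * (2 * f * g)) ^ y = (w * (f ^ 2 + g ^ 2)) ^ z) :
    y ≤ 2 := by
  have hlt := (jesmanowicz_poly_mul_natDegree_lt hf hdeg.ge hfg hw heq).1
  have : y * f.natDegree < 3 * f.natDegree := by rw [← hdeg] at hlt; linarith
  exact Nat.le_of_lt_succ (lt_of_mul_lt_mul_right' this)

theorem jesmanowicz_poly_z_le_two (hf : 0 < f.natDegree) (hdeg : g.natDegree ≤ f.natDegree)
    (hC : (f ^ 2 + g ^ 2).natDegree = 2 * f.natDegree)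
    (hfg : IsCoprime f g) (hw : IsUnit w)
    (heq : (w * (f ^ 2 - g ^ 2)) ^ x + (w * (2 * f * g)) ^ y = (w * (f ^ 2 + g ^ 2)) ^ z) :
    z ≤ 2 := by
  have hlt := (jesmanowicz_poly_mul_natDegree_lt hf hdeg hfg hw heq).2
  have : z * f.natDegree < 3 * f.natDegree := by rw [hC] at hlt; linarith
  exact Nat.le_of_lt_succ (lt_of_mul_lt_mul_right' this)

theorem jesmanowicz_poly_bounds_case3_general (hf : 0 < f.natDegree)
    (hdeg : f.natDegree = g.natDegree) (hlc : f.leadingCoeff ^ 2 + g.leadingCoeff ^ 2 ≠ 0)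
    (hfg : IsCoprime f g) (hw : IsUnit w)
    (heq : (w * (f ^ 2 - g ^ 2)) ^ x + (w * (2 * f * g)) ^ y = (w * (f ^ 2 + g ^ 2)) ^ z) :
    y ≤ 2 ∧ z ≤ 2 := by
  rw [← leadingCoeff_pow, ← leadingCoeff_pow] at hlc
  have hC : (f ^ 2 + g ^ 2).natDegree = 2 * f.natDegree := by
    rw [natDegree_add_eq_max_of_leadingCoeff_add_ne_zero hlc, natDegree_pow, natDegree_pow,
      ← hdeg, max_self]
  exact ⟨jesmanowicz_poly_y_le_two hf hdeg hfg hw heq,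
    jesmanowicz_poly_z_le_two hf hdeg.ge hC hfg hw heq⟩

end Jesmanowicz

theorem jesmanowicz_poly_bounds_case3
    {K : Type*} [Field K] [CharZero K] [IsAlgClosed K]
    (f g w : K[X])
    (hf : 0 < f.natDegree) (hg : 0 < g.natDegree)
    (hdeg : g.natDegree ≤ f.natDegree)
    (hfg : IsCoprime f g) (hw : w ≠ 0) (hwc : w.natDegree = 0)
    (hLT : f.natDegree = g.natDegree ∧ f.leadingCoeff ^ 2 = g.leadingCoeff ^ 2)
    (x y z : ℕ) (hx : 0 < x) (hy : 0 < y) (hz : 0 < z)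
    (heq : (w * (f ^ 2 - g ^ 2)) ^ x + (w * (2 * f * g)) ^ y = (w * (f ^ 2 + g ^ 2)) ^ z) :
    y ≤ 2 ∧ z ≤ 2 := by
  have hlc : f.leadingCoeff ^ 2 + g.leadingCoeff ^ 2 ≠ 0 := by
    have hf0 : f.leadingCoeff ≠ 0 := leadingCoeff_ne_zero.mpr (ne_zero_of_natDegree_gt hf)
    rw [← hLT.2, ← two_mul]
    exact mul_ne_zero two_ne_zero (pow_ne_zero 2 hf0)
  have hwu : IsUnit w := by
    rw [isUnit_iff_degree_eq_zero, degree_eq_natDegree hw, hwc, Nat.cast_zero]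
  exact jesmanowicz_poly_bounds_case3_general hf hLT.1 hlc hfg hwu heq
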